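/- arXiv:1604.06247 — 6 statements merged into one kernel-verified Lean document; each statement's English description precedes it below -/
import Mathlib

section
/- Let R be a commutative ring and A an m×n matrix over R with m ≤ n, regarded as a linear map R^n → R^m. Then (ann(coker A))^m ⊆ I_m(A) ⊆ ann(coker A) ⊆ √(I_m(A)), where I_m(A) is the ideal of m×m minors of A. -/
/-- The annihilator of the cokernel of (the linear map defined by) a matrix. -/
def Matrix.annCoker {R : Type*} [CommRing R] {m n : Type*} [Fintype n] [Fintype m]
    (A : Matrix m n R) : Ideal R :=
  Module.annihilator R ((m → R) ⧸ LinearMap.range A.mulVecLin)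

/-- The determinantal ideal `I_j(A)` generated by all `j × j` minors of `A`. -/
def Matrix.minorsIdeal {R : Type*} [CommRing R] {m n : ℕ}
    (A : Matrix (Fin m) (Fin n) R) (j : ℕ) : Ideal R :=
  Ideal.span { d | ∃ (r : Fin j → Fin m) (c : Fin j → Fin n), d = (A.submatrix r c).det }

theorem annCoker_mem_iff_aux {R : Type*} [CommRing R] {m n : ℕ}
    (A : Matrix (Fin m) (Fin n) R) (f : R) :
    f ∈ A.annCoker ↔ ∀ v : Fin m → R, ∃ w, A.mulVec w = f • v := by
  unfold Matrix.annCoker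
  rw [Module.mem_annihilator]
  constructor
  · intro h v
    have := h (Submodule.Quotient.mk v)
    rw [← Submodule.Quotient.mk_smul, Submodule.Quotient.mk_eq_zero] at this
    exact this
  · intro h x
    obtain ⟨v, rfl⟩ := Submodule.Quotient.mk_surjective _ x
    rw [← Submodule.Quotient.mk_smul, Submodule.Quotient.mk_eq_zero]
    exact h v

theorem det_mul_mem_aux {R : Type*} [CommRing R] {m n : ℕ}
    (A : Matrix (Fin m) (Fin n) R) (B : Matrix (Fin n) (Fin m) R) :
    (A * B).det ∈ A.minorsIdeal m := by
  have h1 : (A * B).det =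
      Matrix.detRowAlternating (fun i : Fin m => ∑ k : Fin n, B k i • (fun j => A j k)) := by
    rw [← Matrix.det_transpose]
    change Matrix.det _ = Matrix.det _
    congr 1
    ext i j
    simp [Matrix.mul_apply, mul_comm]
  rw [h1, ← AlternatingMap.coe_multilinearMap, MultilinearMap.map_sum]
  refine Ideal.sum_mem _ fun r _ => ?_
  rw [MultilinearMap.map_smul_univ, smul_eq_mul]
  refine Ideal.mul_mem_left _ _ (Ideal.subset_span ⟨id, r, ?_⟩)
  rw [← Matrix.det_transpose (A.submatrix id r)]
  rfl

theorem stmt4 {R : Type*} [CommRing R] {m n : ℕ} (hmn : m ≤ n)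
    (A : Matrix (Fin m) (Fin n) R) :
    A.annCoker ^ m ≤ A.minorsIdeal m ∧ A.minorsIdeal m ≤ A.annCoker ∧
      A.annCoker ≤ (A.minorsIdeal m).radical := by
  have h1 : A.annCoker ^ m ≤ A.minorsIdeal m := by
    rw [Submodule.pow_eq_span_pow_set, Submodule.span_le]
    intro x hx
    rw [Set.mem_pow] at hx
    obtain ⟨f, rfl⟩ := hx
    have hf : ∀ i, ∃ w, A.mulVec w = (f i : R) • (Pi.single i 1 : Fin m → R) := fun i =>
      (annCoker_mem_iff_aux A _).1 (f i).2 _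
    choose w hw using hf
    have h2 : A * Matrix.of (fun k i => w i k) = Matrix.diagonal (fun i => (f i : R)) := by
      ext i j
      have := congrFun (hw j) i
      simp only [Matrix.mulVec, dotProduct, Pi.smul_apply, smul_eq_mul] at this
      rw [Matrix.mul_apply]
      simp only [Matrix.of_apply]
      rw [this, Matrix.diagonal_apply, Pi.single_apply]
      split_ifs with h <;> simp [h]
    have h3 := det_mul_mem_aux A (Matrix.of (fun k i => w i k))
    rw [h2, Matrix.det_diagonal] at h3
    rw [List.prod_ofFn]
    exact h3
  refine ⟨h1, ?_, fun f hf => ⟨m, h1 (Ideal.pow_mem_pow hf m)⟩⟩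
  refine Ideal.span_le.2 ?_
  rintro _ ⟨r, c, rfl⟩
  by_cases hr : Function.Injective r
  · have hM : (A.submatrix id c).det ∈ A.annCoker := by
      rw [annCoker_mem_iff_aux]
      intro v
      refine ⟨((1 : Matrix (Fin n) (Fin n) R).submatrix id c).mulVec
        ((A.submatrix id c).adjugate.mulVec v), ?_⟩
      have hA : A * (1 : Matrix (Fin n) (Fin n) R).submatrix id c = A.submatrix id c := by
        ext i j
        simp [Matrix.mul_apply, Matrix.one_apply]
      rw [Matrix.mulVec_mulVec, hA, Matrix.mulVec_mulVec, Matrix.mul_adjugate, Matrix.smul_mulVec,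
        Matrix.one_mulVec]
    have hb := Finite.injective_iff_bijective.1 hr
    have := Matrix.det_permute (Equiv.ofBijective r hb) (A.submatrix id c)
    have h4 : (A.submatrix r c).det = _ := this
    rw [h4]
    exact Ideal.mul_mem_left _ _ hM
  · have : (A.submatrix r c).det = 0 := by
      simp only [Function.Injective, not_forall] at hr
      obtain ⟨a, b, hab, hne⟩ := hr
      refine Matrix.det_zero_of_row_eq hne ?_
      ext k
      simp [hab]
    rw [this]
    exact Ideal.zero_mem _
end

section
/- Let R be a commutative ring and A an m×m matrix over R such that det(A) is not a zero divisor. Then ann(coker A) = I_m(A) : I_{m-1}(A), the ideal quotient of the determinant ideal by the ideal of (m−1)×(m−1) minors. -/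
lemma det_submatrix_dvd {R : Type*} [CommRing R] {k : ℕ} (B : Matrix (Fin k) (Fin k) R)
    (r c : Fin k → Fin k) : B.det ∣ (B.submatrix r c).det := by
  have h : B.submatrix r c =
      (1 : Matrix (Fin k) (Fin k) R).submatrix r id * B *
        (1 : Matrix (Fin k) (Fin k) R).submatrix id c := by
    ext i j
    simp [Matrix.mul_apply, Matrix.one_apply]
  rw [h, Matrix.det_mul, Matrix.det_mul]
  exact (dvd_mul_left _ _).mul_right _

lemma exists_succAbove_comp {k : ℕ} (r : Fin k → Fin (k + 1)) :
    ∃ (i : Fin (k + 1)) (r' : Fin k → Fin k), r = i.succAbove ∘ r' := by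
  have hn : ¬ Function.Surjective r := by
    intro h
    have := Fintype.card_le_of_surjective r h
    simp at this
  simp only [Function.Surjective, not_forall, not_exists] at hn
  obtain ⟨i, hi⟩ := hn
  choose r' hr' using fun a => Fin.exists_succAbove_eq (hi a)
  exact ⟨i, r', funext fun a => (hr' a).symm⟩

lemma minorsIdeal_self {R : Type*} [CommRing R] {m : ℕ} (A : Matrix (Fin m) (Fin m) R) :
    A.minorsIdeal m = Ideal.span {A.det} := by
  apply le_antisymm
  · refine Ideal.span_le.2 ?_
    rintro _ ⟨r, c, rfl⟩
    exact Ideal.mem_span_singleton.2 (det_submatrix_dvd A r c)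
  · refine Ideal.span_le.2 ?_
    rintro _ rfl
    exact Ideal.subset_span ⟨id, id, by simp⟩

lemma mem_colon_iff' {R : Type*} [CommRing R] {k : ℕ}
    (A : Matrix (Fin (k + 1)) (Fin (k + 1)) R) (f : R) :
    f ∈ Submodule.colon (A.minorsIdeal (k + 1)) (A.minorsIdeal k) ↔
      ∀ i j, A.det ∣ f * A.adjugate i j := by
  rw [minorsIdeal_self, Submodule.mem_colon]
  constructor
  · intro h i j
    rw [Matrix.adjugate_fin_succ_eq_det_submatrix, ← Ideal.mem_span_singleton]
    refine h _ (Ideal.mul_mem_left _ _ (Ideal.subset_span ⟨_, _, rfl⟩))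
  · intro h p hp
    have hle : A.minorsIdeal k ≤ Submodule.comap (LinearMap.mulLeft R f) (Ideal.span {A.det}) := by
      refine Ideal.span_le.2 ?_
      rintro _ ⟨r, c, rfl⟩
      obtain ⟨i, r', rfl⟩ := exists_succAbove_comp r
      obtain ⟨j, c', rfl⟩ := exists_succAbove_comp c
      change f * _ ∈ Ideal.span {A.det}
      rw [Ideal.mem_span_singleton]
      have h1 := h j i
      rw [Matrix.adjugate_fin_succ_eq_det_submatrix] at h1
      have h2 : A.det ∣ f * (A.submatrix i.succAbove j.succAbove).det := by
        have h3 := h1.mul_left ((-1) ^ (i + j : ℕ))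
        have h4 : ((-1 : R) ^ (i + j : ℕ)) * (-1) ^ (i + j : ℕ) = 1 := by
          rw [← mul_pow]; simp
        convert h3 using 1
        linear_combination (- f * (A.submatrix i.succAbove j.succAbove).det) * h4
      have h5 := det_submatrix_dvd (A.submatrix i.succAbove j.succAbove) r' c'
      rw [Matrix.submatrix_submatrix] at h5
      exact h2.trans (mul_dvd_mul_left f h5)
    exact hle hp

lemma mem_annCoker_iff {R : Type*} [CommRing R] {m : ℕ} (A : Matrix (Fin m) (Fin m) R) (f : R) :
    f ∈ A.annCoker ↔ ∃ B : Matrix (Fin m) (Fin m) R, A * B = f • (1 : Matrix _ _ R) := by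
  unfold Matrix.annCoker
  rw [Module.mem_annihilator]
  constructor
  · intro h
    have h1 : ∀ j, ∃ w, A.mulVec w = f • (Pi.single j 1 : Fin m → R) := by
      intro j
      have := h (Submodule.Quotient.mk (Pi.single j 1))
      rw [← Submodule.Quotient.mk_smul, Submodule.Quotient.mk_eq_zero] at this
      exact this
    choose w hw using h1
    refine ⟨Matrix.of fun i j => w j i, ?_⟩
    ext i j
    have := congrFun (hw j) i
    simpa [Matrix.mul_apply, Matrix.mulVec, dotProduct, Matrix.one_apply, Pi.single_apply]
      using this
  · rintro ⟨B, hB⟩ q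
    obtain ⟨v, rfl⟩ := Submodule.Quotient.mk_surjective _ q
    rw [← Submodule.Quotient.mk_smul, Submodule.Quotient.mk_eq_zero]
    refine ⟨B.mulVec v, ?_⟩
    rw [Matrix.mulVecLin_apply, Matrix.mulVec_mulVec, hB, Matrix.smul_mulVec, Matrix.one_mulVec]

theorem stmt5 {R : Type*} [CommRing R] {m : ℕ} (A : Matrix (Fin m) (Fin m) R)
    (hdet : A.det ∈ nonZeroDivisors R) :
    A.annCoker = Submodule.colon (A.minorsIdeal m) (A.minorsIdeal (m - 1)) := by
  cases m with
  | zero =>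
    ext f
    rw [mem_annCoker_iff, minorsIdeal_self]
    refine ⟨fun _ => ?_, fun _ => ⟨0, Subsingleton.elim _ _⟩⟩
    rw [Submodule.mem_colon]
    intro p _
    simp [Ideal.span_singleton_one]
  | succ k =>
    ext f
    rw [mem_annCoker_iff, Nat.add_sub_cancel, mem_colon_iff']
    constructor
    · rintro ⟨B, hB⟩ i j
      have h := congrArg (fun M => (A.adjugate * M) i j) hB
      simp only [← Matrix.mul_assoc, Matrix.adjugate_mul] at h
      simp at h
      exact ⟨B i j, h.symm⟩
    · intro h
      choose B hB using h
      refine ⟨Matrix.of B, ?_⟩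
      have h1 : f • A.adjugate = A.det • Matrix.of B := by
        ext i j
        simpa using hB i j
      have h2 : A.det • (A * Matrix.of B) = A.det • (f • (1 : Matrix _ _ R)) := by
        rw [← Matrix.mul_smul, ← h1, Matrix.mul_smul, Matrix.mul_adjugate, smul_comm]
      ext i j
      have h3 := congrFun (congrFun h2 i) j
      simp only [Matrix.smul_apply, smul_eq_mul] at h3 ⊢
      exact (mul_cancel_left_mem_nonZeroDivisors hdet).1 h3
end

section
/- Let R be a commutative ring and A an m×m matrix over R whose determinant is not a zero divisor. Then ann(coker A) = ann(coker Aᵀ). -/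
theorem mem_annCoker_iff_aux {R : Type*} [CommRing R] {m : ℕ} (A : Matrix (Fin m) (Fin m) R)
    (r : R) : r ∈ A.annCoker ↔ ∃ B : Matrix (Fin m) (Fin m) R, A * B = r • 1 := by
  unfold Matrix.annCoker
  rw [Module.mem_annihilator]
  constructor
  · intro h
    have h2 : ∀ j : Fin m, ∃ v : Fin m → R, A.mulVec v = r • Pi.single j 1 := by
      intro j
      have h3 := h (Submodule.Quotient.mk (Pi.single j 1))
      rw [← Submodule.Quotient.mk_smul, Submodule.Quotient.mk_eq_zero] at h3
      obtain ⟨v, hv⟩ := h3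
      exact ⟨v, by simpa using hv⟩
    choose v hv using h2
    refine ⟨Matrix.of fun i j => v j i, ?_⟩
    ext i j
    have h4 := congrFun (hv j) i
    simp only [Pi.smul_apply, Pi.single_apply] at h4
    rw [Matrix.smul_apply, Matrix.one_apply, ← h4]
    rfl
  · rintro ⟨B, hB⟩ q
    obtain ⟨w, rfl⟩ := Submodule.Quotient.mk_surjective _ q
    rw [← Submodule.Quotient.mk_smul, Submodule.Quotient.mk_eq_zero]
    refine ⟨B.mulVec w, ?_⟩
    rw [Matrix.mulVecLin_apply, Matrix.mulVec_mulVec, hB, Matrix.smul_mulVec, Matrix.one_mulVec]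

theorem comm_aux {R : Type*} [CommRing R] {m : ℕ} (A B : Matrix (Fin m) (Fin m) R)
    (hdet : A.det ∈ nonZeroDivisors R) (r : R) (h : A * B = r • 1) : B * A = r • 1 := by
  have h1 : A.det • B = r • A.adjugate := by
    have := congrArg (fun M => A.adjugate * M) h
    simpa [← Matrix.mul_assoc, Matrix.adjugate_mul] using this
  have h2 : A.det • (B * A) = A.det • (r • (1 : Matrix (Fin m) (Fin m) R)) := by
    rw [← Matrix.smul_mul, h1, Matrix.smul_mul, Matrix.adjugate_mul, smul_comm]
  ext i j
  have h3 := congrFun (congrFun h2 i) j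
  rw [Matrix.smul_apply, Matrix.smul_apply A.det] at h3
  exact (mul_cancel_left_mem_nonZeroDivisors hdet).1 h3

theorem stmt7 {R : Type*} [CommRing R] {m : ℕ} (A : Matrix (Fin m) (Fin m) R)
    (hdet : A.det ∈ nonZeroDivisors R) :
    A.annCoker = A.transpose.annCoker := by
  ext r
  rw [mem_annCoker_iff_aux, mem_annCoker_iff_aux]
  constructor
  · rintro ⟨B, hB⟩
    refine ⟨B.transpose, ?_⟩
    rw [← Matrix.transpose_mul, comm_aux A B hdet r hB]
    simp
  · rintro ⟨B, hB⟩
    refine ⟨B.transpose, ?_⟩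
    have h := comm_aux A.transpose B (by rwa [Matrix.det_transpose]) r hB
    have h' := congrArg Matrix.transpose h
    simpa using h'
end

section
/- Let R be a commutative ring and φ : E → F a map of finite free R-modules with rank(F) = m. For any 1 ≤ j ≤ m the ideals satisfy I_j(φ) ⊆ ann.coker_j(φ) and (ann.coker_j(φ))^j ⊆ I_j(φ), where I_j(φ) is the ideal of j×j minors of φ and ann.coker_j(φ) := ann(Λ^{m+1-j} coker(φ)). -/
/-- The generalized annihilator-of-cokernel
`ann.coker_j(A) := ann (Λ^{m+1-j} (coker A))`. -/
def Matrix.annCokerJ {R : Type*} [CommRing R] {m n : ℕ}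
    (A : Matrix (Fin m) (Fin n) R) (j : ℕ) : Ideal R :=
  Module.annihilator R ↥(⋀[R]^(m + 1 - j) ((Fin m → R) ⧸ LinearMap.range A.mulVecLin))

open scoped TensorProduct in
/-- If `j + k > m` then the `j × j` minors kill the `k`-th exterior power of the cokernel. -/
theorem aux_minor_smul {R : Type*} [CommRing R] {m n j k : ℕ} (hjk : m < j + k)
    (A : Matrix (Fin m) (Fin n) R) (r : Fin j → Fin m) (c : Fin j → Fin n)
    (y : Fin k → (Fin m → R)) :
    (A.submatrix r c).det • exteriorPower.ιMulti R k
      (fun b => (LinearMap.range A.mulVecLin).mkQ (y b)) = 0 := by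
  classical
  let α : (Fin m → R) [⋀^Fin j]→ₗ[R] R :=
    Matrix.detRowAlternating.compLinearMap (LinearMap.funLeft R R r)
  let β : (Fin m → R) [⋀^Fin k]→ₗ[R] (⋀[R]^k ((Fin m → R) ⧸ LinearMap.range A.mulVecLin)) :=
    (exteriorPower.ιMulti R k).compLinearMap (LinearMap.range A.mulVecLin).mkQ
  have hz : α.domCoprod β = 0 := by
    refine Module.Basis.ext_alternating (Pi.basisFun R (Fin m)) fun v hv => ?_
    exfalso
    have := Fintype.card_le_of_injective v hv
    simp at this
    omega
  let u : Fin j ⊕ Fin k → (Fin m → R) := Sum.elim (fun a => A.col (c a)) y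
  have hcol : ∀ i, A.col i ∈ LinearMap.range A.mulVecLin := fun i =>
    ⟨Pi.single i 1, by simp⟩
  have h1 : (α.domCoprod β) u = α (fun a => A.col (c a)) ⊗ₜ[R] β y := by
    have : (α.domCoprod β) u = ∑ σ, AlternatingMap.domCoprod.summand α β σ u := by
      rw [← AlternatingMap.coe_multilinearMap, AlternatingMap.domCoprod_coe]
      simp
    rw [this]
    refine (Finset.sum_eq_single (Quotient.mk'' 1 : Equiv.Perm.ModSumCongr (Fin j) (Fin k))
      ?_ ?_).trans ?_
    · intro σ _ hσ
      induction σ using Quotient.inductionOn' with | _ σ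
      rw [AlternatingMap.domCoprod.summand_mk'']
      have : ∃ b a, σ (Sum.inr b) = Sum.inl a := by
        by_contra! hcon
        apply hσ
        apply Quotient.sound'
        rw [QuotientGroup.leftRel_apply, mul_one]
        apply Equiv.Perm.mem_sumCongrHom_range_of_perm_mapsTo_inl
        rintro _ ⟨a, rfl⟩
        rcases hx : σ⁻¹ (Sum.inl a) with a2 | b
        · exact ⟨a2, rfl⟩
        · rw [Equiv.Perm.inv_eq_iff_eq] at hx
          exact absurd hx.symm (hcon b a)
      obtain ⟨b, a, hba⟩ := this
      have hb0 : β (fun i => u (σ (Sum.inr i))) = 0 := by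
        refine (exteriorPower.ιMulti R k).map_coord_zero b ?_
        have hua : u (σ (Sum.inr b)) ∈ LinearMap.range A.mulVecLin := by
          rw [hba]
          exact hcol (c a)
        exact (Submodule.Quotient.mk_eq_zero _).mpr hua
      simp only [smul_apply, MultilinearMap.domDomCongr_apply,
        MultilinearMap.domCoprod_apply, AlternatingMap.coe_multilinearMap, hb0,
        TensorProduct.tmul_zero, smul_zero]
    · simp
    · simp [AlternatingMap.domCoprod.summand_mk'', u]
  rw [hz] at h1
  have h2 := congrArg (TensorProduct.lid R _) h1
  simp only [AlternatingMap.zero_apply, map_zero, TensorProduct.lid_tmul] at h2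
  rw [← Matrix.det_transpose]
  exact h2.symm

/-- Freeze some coordinates of an alternating map. -/
noncomputable def auxFreeze {R M N : Type*} [CommRing R] [AddCommGroup M] [Module R M]
    [AddCommGroup N] [Module R N] {ι κ : Type*} (p : κ → ι) (hp : Function.Injective p)
    (h : M [⋀^ι]→ₗ[R] N) (w : ι → M) : M [⋀^κ]→ₗ[R] N where
  toFun u := h (Function.extend p u w)
  map_update_add' := by
    classical
    intro _ u a x y
    have key : ∀ z, Function.extend p (Function.update u a z) w =
        Function.update (Function.extend p u w) (p a) z := by
      intro z
      ext1 i
      by_cases hi : ∃ b, p b = i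
      · obtain ⟨b, rfl⟩ := hi
        simp only [hp.extend_apply, Function.update_apply, hp.eq_iff]
      · rw [Function.extend_apply' _ _ _ hi, Function.update_of_ne, Function.extend_apply' _ _ _ hi]
        rintro rfl
        exact hi ⟨a, rfl⟩
    simp only [key, h.map_update_add]
  map_update_smul' := by
    classical
    intro _ u a x y
    have key : ∀ z, Function.extend p (Function.update u a z) w =
        Function.update (Function.extend p u w) (p a) z := by
      intro z
      ext1 i
      by_cases hi : ∃ b, p b = i
      · obtain ⟨b, rfl⟩ := hi
        simp only [hp.extend_apply, Function.update_apply, hp.eq_iff]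
      · rw [Function.extend_apply' _ _ _ hi, Function.update_of_ne, Function.extend_apply' _ _ _ hi]
        rintro rfl
        exact hi ⟨a, rfl⟩
    simp only [key, h.map_update_smul]
  map_eq_zero_of_eq' := by
    intro u a b hab hne
    exact h.map_eq_zero_of_eq _ (by simpa [hp.extend_apply] using hab) (hp.ne hne)

/-- Alternating maps evaluated on elements of the image lie in the ideal of minors. -/
theorem aux_alt_mem {R : Type*} [CommRing R] {m n j : ℕ}
    (A : Matrix (Fin m) (Fin n) R) (h : (Fin m → R) [⋀^Fin j]→ₗ[R] R)
    (u : Fin j → (Fin m → R)) (hu : ∀ a, u a ∈ LinearMap.range A.mulVecLin) :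
    h u ∈ A.minorsIdeal j := by
  classical
  choose x hx using hu
  let q : R →ₗ[R] (R ⧸ A.minorsIdeal j) := (A.minorsIdeal j).mkQ
  have hz : (q.compAlternatingMap h).compLinearMap A.mulVecLin = 0 := by
    refine Module.Basis.ext_alternating (Pi.basisFun R (Fin n)) fun v hv => ?_
    simp only [AlternatingMap.compLinearMap_apply, LinearMap.compAlternatingMap_apply,
      AlternatingMap.zero_apply, q, Submodule.mkQ_apply, Submodule.Quotient.mk_eq_zero]
    rw [← exteriorPower.alternatingMapLinearEquiv_apply_ιMulti]
    rw [← ((Pi.basisFun R (Fin m)).exteriorPower j).sum_repr (exteriorPower.ιMulti R j _), map_sum]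
    refine Submodule.sum_mem _ fun s _ => ?_
    rw [map_smul, exteriorPower.basis_repr_apply, exteriorPower.ιMultiDual_apply_ιMulti,
      smul_eq_mul]
    refine Ideal.mul_mem_right _ _ (Ideal.subset_span
      ⟨Set.powersetCard.ofFinEmbEquiv.symm s, v, ?_⟩)
    rw [← Matrix.det_transpose]
    congr 1
    ext a b
    simp
  have := congrArg (fun f => f x) hz
  simp only [AlternatingMap.compLinearMap_apply, LinearMap.compAlternatingMap_apply, hx,
      AlternatingMap.zero_apply, q, Submodule.mkQ_apply, Submodule.Quotient.mk_eq_zero] at this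
  exact this

/-- An alternating map vanishing when a coordinate lies in `N` factors through the quotient. -/
theorem aux_factor {R M P : Type*} [CommRing R] [AddCommGroup M] [Module R M]
    [AddCommGroup P] [Module R P] {k : ℕ} (N : Submodule R M) (g : M [⋀^Fin k]→ₗ[R] P)
    (hg : ∀ u i, u i ∈ N → g u = 0) :
    ∃ f : (M ⧸ N) [⋀^Fin k]→ₗ[R] P, ∀ u, f (fun i => N.mkQ (u i)) = g u := by
  classical
  have inv : ∀ u u' : Fin k → M, (∀ i, N.mkQ (u i) = N.mkQ (u' i)) → g u = g u' := by
    intro u u' huu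
    have e : u = u' + (u - u') := by abel
    have := g.toMultilinearMap.map_add_univ u' (u - u')
    rw [← e, Finset.sum_eq_single Finset.univ] at this
    · simpa using this
    · intro s _ hs
      obtain ⟨i, hi⟩ : ∃ i, i ∉ s := by
        by_contra! hc
        exact hs (Finset.eq_univ_iff_forall.mpr hc)
      refine hg _ i ?_
      rw [Finset.piecewise_eq_of_notMem _ _ _ hi]
      exact (Submodule.Quotient.eq N).mp (huu i)
    · simp
  have hs := N.mkQ_surjective
  let o : M ⧸ N → M := Function.surjInv hs
  have ho : ∀ x, N.mkQ (o x) = x := Function.surjInv_eq hs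
  have hupd : ∀ (u : Fin k → M ⧸ N) (i : Fin k) (x : M ⧸ N) (y : M), N.mkQ y = x →
      g (fun a => o (Function.update u i x a)) = g (Function.update (fun a => o (u a)) i y) := by
    intro u i x y hy
    apply inv
    intro a
    rw [ho]
    by_cases ha : a = i
    · subst ha; simp [← hy]
    · rw [Function.update_of_ne ha, Function.update_of_ne ha, ho]
  refine ⟨{ toFun := fun u => g (fun a => o (u a))
            map_update_add' := ?_
            map_update_smul' := ?_
            map_eq_zero_of_eq' := ?_ }, ?_⟩
  · intro inst u i x y
    rw [Subsingleton.elim inst (instDecidableEqFin k)]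
    rw [hupd u i (x + y) (o x + o y) (by simp only [map_add, ho]), hupd u i x _ (ho x),
      hupd u i y _ (ho y), g.map_update_add]
  · intro inst u i c x
    rw [Subsingleton.elim inst (instDecidableEqFin k)]
    rw [hupd u i (c • x) (c • o x) (by simp only [map_smul, ho]), hupd u i x _ (ho x),
      g.map_update_smul]
  · intro u i j hij hne
    exact g.map_eq_zero_of_eq _ (by simp [hij]) hne
  · intro u
    exact inv _ _ fun i => ho _

theorem aux_step {R : Type*} [CommRing R] {m n i k : ℕ} (hik : i + k = m)
    (A : Matrix (Fin m) (Fin n) R) (r : Fin i → Fin m) (c : Fin i → Fin n) (a : R)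
    (ha : a ∈ Module.annihilator R (⋀[R]^k ((Fin m → R) ⧸ LinearMap.range A.mulVecLin))) :
    a * (A.submatrix r c).det ∈ A.minorsIdeal (i + 1) := by
  classical
  by_cases hr : Function.Injective r
  swap
  · have : (A.submatrix r c).det = 0 := by
      simp only [Function.Injective, not_forall] at hr
      obtain ⟨x, y, hxy, hne⟩ := hr
      exact Matrix.det_zero_of_row_eq hne (by ext z; simp [hxy])
    simp [this]
  have hcard : Fintype.card (Fin k) = Fintype.card {x // x ∉ Set.range r} := by
    rw [Fintype.card_subtype_compl]
    have := Set.card_range_of_injective hr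
    simp only [Fintype.card_fin] at *
    have h2 : Fintype.card {x // x ∈ Set.range r} = i := this
    omega
  let e := Fintype.equivOfCardEq hcard
  let q : Fin k → Fin m := fun b => (e b).1
  have hq : Function.Injective q := Subtype.val_injective.comp e.injective
  have hqr : ∀ b x, r x ≠ q b := fun b x hx => (e b).2 ⟨x, hx⟩
  have hcol : ∀ i, A.col i ∈ LinearMap.range A.mulVecLin := fun i =>
    ⟨Pi.single i 1, by simp⟩
  let w : Fin m → (Fin m → R) := Function.extend r (fun x => A.col (c x)) 0
  let g := auxFreeze q hq (Matrix.detRowAlternating (R := R) (n := Fin m)) w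
  let Q : R →ₗ[R] (R ⧸ A.minorsIdeal (i + 1)) := (A.minorsIdeal (i + 1)).mkQ
  obtain ⟨f, hf⟩ := aux_factor (LinearMap.range A.mulVecLin) (Q.compAlternatingMap g) (by
    intro u b hb
    simp only [LinearMap.compAlternatingMap_apply, Q, Submodule.mkQ_apply,
      Submodule.Quotient.mk_eq_zero]
    let p : Fin (i + 1) → Fin m := Fin.cons (q b) r
    have hp : Function.Injective p := Fin.cons_injective_iff.mpr ⟨fun ⟨x, hx⟩ => hqr b x hx, hr⟩
    let W : Fin m → (Fin m → R) := Function.extend q u w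
    have hW : g u = auxFreeze p hp (Matrix.detRowAlternating (R := R) (n := Fin m)) W (W ∘ p) := by
      change Matrix.detRowAlternating W = Matrix.detRowAlternating (Function.extend p (W ∘ p) W)
      congr 1
      ext1 y
      by_cases hy : ∃ z, p z = y
      · obtain ⟨z, rfl⟩ := hy
        rw [hp.extend_apply]; rfl
      · rw [Function.extend_apply' _ _ _ hy]
    rw [hW]
    apply aux_alt_mem
    intro z
    refine Fin.cases ?_ (fun z => ?_) z
    · simpa [p, W, hq.extend_apply] using hb
    · have : W (r z) = A.col (c z) := by
        simp only [W]
        rw [Function.extend_apply' _ _ _ (fun ⟨b, hb⟩ => hqr b z hb.symm)]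
        simp [w, hr.extend_apply]
      simpa [p, this] using hcol (c z))
  have hdet : g (fun b => Pi.single (q b) 1) = (A.submatrix r c).det := by
    change Matrix.det (Matrix.of (Function.extend q (fun b => Pi.single (q b) (1 : R)) w)) = _
    have hbij : Function.Bijective (Sum.elim r q) := by
      rw [Fintype.bijective_iff_injective_and_card]
      refine ⟨hr.sumElim hq fun x b => hqr b x, by simp [hik]⟩
    let E := Equiv.ofBijective _ hbij
    rw [← Matrix.det_submatrix_equiv_self E]
    have : (Matrix.of (Function.extend q (fun b => Pi.single (q b) (1 : R)) w)).submatrix E E =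
        Matrix.fromBlocks (A.submatrix r c).transpose (Matrix.of fun x b => A (q b) (c x)) 0 1 := by
      have hWr : ∀ x, Function.extend q (fun b => Pi.single (q b) (1 : R)) w (r x) =
          A.col (c x) := by
        intro x
        rw [Function.extend_apply' _ _ _ (fun ⟨b, hb⟩ => hqr b x hb.symm)]
        simp [w, hr.extend_apply]
      ext x y
      rcases x with x | x <;> rcases y with y | y
      · simp [E, hWr]
      · simp [E, hWr]
      · simp [E, hq.extend_apply, hqr]
      · simp [E, hq.extend_apply, Matrix.one_apply, Pi.single_apply, hq.eq_iff, eq_comm]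
    rw [this, Matrix.det_fromBlocks_zero₂₁, Matrix.det_transpose, Matrix.det_one, mul_one]
  have h0 := Module.mem_annihilator.mp ha (exteriorPower.ιMulti R k
    (fun b => (LinearMap.range A.mulVecLin).mkQ (Pi.single (q b) 1)))
  have h1 := congrArg (exteriorPower.alternatingMapLinearEquiv f) h0
  rw [map_smul, map_zero, exteriorPower.alternatingMapLinearEquiv_apply_ιMulti, hf,
    LinearMap.compAlternatingMap_apply, hdet, ← map_smul] at h1
  exact (Submodule.Quotient.mk_eq_zero _).mp h1

theorem aux_ann_succ {R M : Type*} [CommRing R] [AddCommGroup M] [Module R M] (k : ℕ) :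
    Module.annihilator R (⋀[R]^k M) ≤ Module.annihilator R (⋀[R]^(k + 1) M) := by
  intro a ha
  rw [Module.mem_annihilator] at *
  have : (LinearMap.lsmul R (⋀[R]^(k+1) M) a) = 0 := by
    apply exteriorPower.linearMap_ext
    ext1 x
    let f := (exteriorPower.ιMulti R (k + 1) (M := M)).curryLeft (x 0)
    have h1 := congrArg (exteriorPower.alternatingMapLinearEquiv f)
      (ha (exteriorPower.ιMulti R k (fun i => x i.succ)))
    rw [map_smul, map_zero, exteriorPower.alternatingMapLinearEquiv_apply_ιMulti] at h1
    have h2 : f (fun i => x i.succ) = exteriorPower.ιMulti R (k + 1) x := by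
      change exteriorPower.ιMulti R (k + 1) (Matrix.vecCons (x 0) (Matrix.vecTail x)) = _
      rw [show Matrix.vecCons (x 0) (Matrix.vecTail x) = x from Matrix.cons_head_tail x]
    rw [h2] at h1
    simpa using h1
  intro y
  exact congrArg (fun g => g y) this

theorem aux_ann_mono {R M : Type*} [CommRing R] [AddCommGroup M] [Module R M] {k l : ℕ}
    (h : k ≤ l) : Module.annihilator R (⋀[R]^k M) ≤ Module.annihilator R (⋀[R]^l M) :=
  monotone_nat_of_le_succ (f := fun k => Module.annihilator R (⋀[R]^k M)) aux_ann_succ h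

theorem stmt11 {R : Type*} [CommRing R] {m n : ℕ}
    (A : Matrix (Fin m) (Fin n) R) (j : ℕ) (hj1 : 1 ≤ j) (hjm : j ≤ m) :
    A.minorsIdeal j ≤ A.annCokerJ j ∧ (A.annCokerJ j) ^ j ≤ A.minorsIdeal j := by
  constructor
  · refine Ideal.span_le.mpr ?_
    rintro _ ⟨r, c, rfl⟩
    change _ ∈ Module.annihilator R _
    rw [Module.mem_annihilator]
    have : (LinearMap.lsmul R (⋀[R]^(m + 1 - j) ((Fin m → R) ⧸ LinearMap.range A.mulVecLin))
        (A.submatrix r c).det) = 0 := by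
      apply exteriorPower.linearMap_ext
      ext1 x
      choose y hy using fun i => (LinearMap.range A.mulVecLin).mkQ_surjective (x i)
      have := aux_minor_smul (k := m + 1 - j) (by omega) A r c y
      simp only [hy] at this
      simpa using this
    intro y
    exact congrArg (fun g => g y) this
  · have key : ∀ i ≤ j, (A.annCokerJ j) ^ i ≤ A.minorsIdeal i := by
      intro i
      induction i with
      | zero =>
        intro _
        have : (1 : R) ∈ A.minorsIdeal 0 :=
          Ideal.subset_span ⟨Fin.elim0, Fin.elim0, by simp⟩
        rw [(Ideal.eq_top_iff_one _).mpr this]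
        exact le_top
      | succ i ih =>
        intro hi
        rw [pow_succ]
        refine (Ideal.mul_mono_left (ih (by omega))).trans ?_
        rw [Ideal.mul_le]
        intro d hd a ha
        have ha' : a ∈ Module.annihilator R
            (⋀[R]^(m - i) ((Fin m → R) ⧸ LinearMap.range A.mulVecLin)) :=
          aux_ann_mono (by omega) ha
        have : A.minorsIdeal i ≤ Submodule.comap (LinearMap.lsmul R R a)
            (A.minorsIdeal (i + 1)) := by
          refine Submodule.span_le.mpr ?_
          rintro _ ⟨r, c, rfl⟩
          exact aux_step (by omega) A r c a ha'
        rw [mul_comm]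
        exact this hd
    exact key j le_rfl
end

section
/- Let R be a commutative ring and φ : E → F a map of finite free R-modules with rank(F) = m. For 1 ≤ j ≤ m, ann.coker_j(φ) ⊆ I_j(φ) : I_{j-1}(φ). In particular, if I_{j-1}(φ) contains a non-zerodivisor modulo I_j(φ), then ann.coker_j(φ) = I_j(φ) : I_{j-1}(φ). -/
open scoped TensorProduct

/-- A square matrix, `j` of whose rows come from columns of `A`, has determinant in `I_j(A)`. -/
theorem det_mem_minors_fin {R : Type*} [CommRing R] {m n : ℕ}
    (A : Matrix (Fin m) (Fin n) R) (j : ℕ) (q : ℕ) :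
    ∀ (B : Matrix (Fin (j + q)) (Fin (j + q)) R) (g : Fin j → Fin (j + q))
      (_ : Function.Injective g) (r : Fin (j + q) → Fin m) (c : Fin j → Fin n)
      (_ : ∀ a k, B (g a) k = A (r k) (c a)), B.det ∈ A.minorsIdeal j := by
  induction q with
  | zero =>
    intro B g hg r c hB
    have hgb : Function.Bijective g := (Finite.injective_iff_bijective).1 hg
    let e : Fin j ≃ Fin j := Equiv.ofBijective g hgb
    refine Ideal.subset_span ⟨r, c ∘ e.symm, ?_⟩
    rw [← Matrix.det_transpose]
    congr 1
    ext k l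
    have := hB (e.symm l) k
    have h2 : g (e.symm l) = l := e.apply_symm_apply l
    rw [h2] at this
    simpa using this
  | succ q ih =>
    intro B g hg r c hB
    have hns : ¬ Function.Surjective g := by
      intro hs
      have := Fintype.card_le_of_surjective g hs
      simp at this
    obtain ⟨t, ht⟩ := not_forall.1 hns
    have hg' : ∀ a, ∃ b : Fin (j + q), (t : Fin ((j + q) + 1)).succAbove b = g a := by
      intro a
      exact Fin.exists_succAbove_eq (fun h => ht ⟨a, h⟩)
    choose g' hg' using hg'
    rw [Matrix.det_succ_row (n := j + q) B t]
    refine Ideal.sum_mem _ fun k _ => Ideal.mul_mem_left _ _ ?_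
    refine ih _ g' ?_ (r ∘ Fin.succAbove (n := j + q) k) c ?_
    · intro a b hab
      apply hg
      rw [← hg', ← hg', hab]
    · intro a l
      simp only [Matrix.submatrix_apply, Function.comp]
      rw [hg' a, hB]

theorem det_mem_minors {R : Type*} [CommRing R] {m n : ℕ}
    (A : Matrix (Fin m) (Fin n) R) (j : ℕ) {κ : Type*} [Fintype κ] [DecidableEq κ]
    (B : Matrix κ κ R) (g : Fin j → κ) (hg : Function.Injective g)
    (r : κ → Fin m) (c : Fin j → Fin n)
    (hB : ∀ a k, B (g a) k = A (r k) (c a)) : B.det ∈ A.minorsIdeal j := by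
  have hc : j ≤ Fintype.card κ := by simpa using Fintype.card_le_of_injective g hg
  obtain ⟨q, hq⟩ := Nat.exists_eq_add_of_le hc
  let e : κ ≃ Fin (j + q) := Fintype.equivFinOfCardEq hq
  rw [← Matrix.det_submatrix_equiv_self e.symm B]
  refine det_mem_minors_fin A j q _ (e ∘ g) (e.injective.comp hg) (r ∘ e.symm) c ?_
  intro a k
  simp [hB]

/-- Alternating maps killed by `N` in each slot descend to the quotient. -/
theorem alternating_descend {R F Q ι : Type*} [CommRing R] [AddCommGroup F] [Module R F]
    [AddCommGroup Q] [Module R Q] [Fintype ι] [hdec : DecidableEq ι] (N : Submodule R F)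
    (G : F [⋀^ι]→ₗ[R] Q) (hG : ∀ v i, v i ∈ N → G v = 0) :
    ∃ G' : (F ⧸ N) [⋀^ι]→ₗ[R] Q, ∀ v : ι → F, G' (fun i => N.mkQ (v i)) = G v := by
  have key : ∀ v w : ι → F, (∀ i, N.mkQ (v i) = N.mkQ (w i)) → G v = G w := by
    intro v w h
    have hv : v = w + (v - w) := by abel
    rw [hv, G.map_add_univ, Finset.sum_eq_single Finset.univ]
    · simp
    · intro s _ hs
      have : ∃ i, i ∉ s := by
        by_contra hcon
        push Not at hcon
        exact hs (Finset.eq_univ_iff_forall.2 hcon)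
      obtain ⟨i, hi⟩ := this
      apply hG _ i
      rw [Finset.piecewise_eq_of_notMem _ _ _ hi]
      exact (Submodule.Quotient.eq N).1 (h i)
    · simp
  choose s hs using N.mkQ_surjective
  refine ⟨{ toFun := fun v => G (fun i => s (v i)), map_update_add' := ?_,
            map_update_smul' := ?_, map_eq_zero_of_eq' := ?_ }, ?_⟩
  · intro inst v i x y
    obtain rfl : hdec = inst := Subsingleton.elim _ _
    have h : ∀ z, G (fun k => s (Function.update v i z k))
        = G (Function.update (fun k => s (v k)) i (s z)) := by
      intro z
      congr 1
      ext k
      by_cases hk : k = i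
      · subst hk; simp
      · simp [hk]
    rw [h x, h y, ← G.map_update_add]
    apply key
    intro k
    by_cases hk : k = i
    · subst hk
      rw [hs]
      simp only [Function.update_self, map_add, hs]
    · simp [hk]
  · intro inst v i a x
    obtain rfl : hdec = inst := Subsingleton.elim _ _
    have h : ∀ z, G (fun k => s (Function.update v i z k))
        = G (Function.update (fun k => s (v k)) i (s z)) := by
      intro z
      congr 1
      ext k
      by_cases hk : k = i
      · subst hk; simp
      · simp [hk]
    rw [h x, ← G.map_update_smul]
    apply key
    intro k
    by_cases hk : k = i
    · subst hk
      rw [hs]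
      simp only [Function.update_self, map_smul, hs]
    · simp [hk]
  · intro v i k hv hik
    exact G.map_eq_zero_of_eq _ (by simp [hv]) hik
  · intro v
    apply key
    intro i
    rw [hs]

/-- Fixing the first block of arguments of an alternating map. -/
def altFix {R F Q α β : Type*} [CommRing R] [AddCommGroup F] [Module R F]
    [AddCommGroup Q] [Module R Q] [DecidableEq α] [hdec : DecidableEq β]
    (D : F [⋀^α ⊕ β]→ₗ[R] Q) (C : α → F) : F [⋀^β]→ₗ[R] Q where
  toFun v := D (Sum.elim C v)
  map_update_add' := by
    intro inst v i x y
    obtain rfl : hdec = inst := Subsingleton.elim _ _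
    simp only [Sum.elim_update_right, D.map_update_add]
  map_update_smul' := by
    intro inst v i a x
    obtain rfl : hdec = inst := Subsingleton.elim _ _
    simp only [Sum.elim_update_right, D.map_update_smul]
  map_eq_zero_of_eq' := by
    intro v i k hv hik
    exact D.map_eq_zero_of_eq (i := Sum.inr i) (j := Sum.inr k) _ hv (by simpa using hik)

theorem ann_mul_minor {R : Type*} [CommRing R] {m n : ℕ}
    (A : Matrix (Fin m) (Fin n) R) (i p : ℕ) (hm : m = i + p) (f : R)
    (hf : f ∈ Module.annihilator R ↥(⋀[R]^p ((Fin m → R) ⧸ LinearMap.range A.mulVecLin)))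
    (r : Fin i → Fin m) (c : Fin i → Fin n) :
    f * (A.submatrix r c).det ∈ A.minorsIdeal (i + 1) := by
  by_cases hr : Function.Injective r
  swap
  · obtain ⟨a, b, hab, hne⟩ : ∃ a b, r a = r b ∧ a ≠ b := by
      simpa [Function.Injective] using hr
    rw [Matrix.det_zero_of_row_eq hne (by ext k; simp [hab])]
    simp
  obtain ⟨e, he⟩ : ∃ e : Fin i ⊕ Fin p ≃ Fin m, ∀ a, e (Sum.inl a) = r a := by
    have h1 : Fintype.card ↥((Set.range r)ᶜ : Set (Fin m)) = p := by
      rw [Fintype.card_compl_set, Set.card_range_of_injective hr]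
      simp; omega
    let e2 : Fin p ≃ ↥((Set.range r)ᶜ : Set (Fin m)) := (Fintype.equivFinOfCardEq h1).symm
    exact ⟨(Equiv.sumCongr (Equiv.ofInjective r hr) e2).trans (Equiv.Set.sumCompl _),
      fun a => by simp⟩
  let I := A.minorsIdeal (i + 1)
  let D : (Fin m → R) [⋀^Fin i ⊕ Fin p]→ₗ[R] (R ⧸ I) :=
    (Submodule.mkQ I).compAlternatingMap
      ((Matrix.detRowAlternating (n := Fin i ⊕ Fin p) (R := R)).compLinearMap
        (LinearMap.funLeft R R e))
  let C : Fin i → Fin m → R := fun a b => A b (c a)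
  let G := altFix D C
  have hGapp : ∀ v, G v = Submodule.mkQ I
      (Matrix.det (Matrix.of fun k l => (Sum.elim C v : Fin i ⊕ Fin p → Fin m → R) k (e l))) :=
    fun v => rfl
  have hG : ∀ v l, v l ∈ LinearMap.range A.mulVecLin → G v = 0 := by
    intro v l hv
    have hle : LinearMap.range A.mulVecLin ≤
        LinearMap.ker (G.toMultilinearMap.toLinearMap v l) := by
      rw [Matrix.range_mulVecLin, Submodule.span_le]
      rintro _ ⟨k, rfl⟩
      change G (Function.update v l (A.col k)) = 0
      rw [hGapp, Submodule.mkQ_apply, Submodule.Quotient.mk_eq_zero]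
      refine det_mem_minors A (i + 1) _ (Fin.cons (Sum.inr l) Sum.inl) ?_ e (Fin.cons k c) ?_
      · rw [Fin.cons_injective_iff]
        exact ⟨by simp, Sum.inl_injective⟩
      · intro a b
        refine Fin.cases ?_ (fun a => ?_) a
        · change Function.update v l (A.col k) l (e b) = A (e b) k
          rw [Function.update_self]
          rfl
        · rfl
    have := hle hv
    simpa using this
  obtain ⟨G', hG'⟩ := alternating_descend _ G hG
  let v : Fin p → Fin m → R := fun l => Pi.single (e (Sum.inr l)) 1
  have h0 := (Module.mem_annihilator.1 hf) (exteriorPower.ιMulti R p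
    (fun l => (LinearMap.range A.mulVecLin).mkQ (v l)))
  have h1 := congrArg (exteriorPower.alternatingMapLinearEquiv G') h0
  rw [map_smul, exteriorPower.alternatingMapLinearEquiv_apply_ιMulti, hG', hGapp, map_zero,
    ← map_smul, Submodule.mkQ_apply, Submodule.Quotient.mk_eq_zero] at h1
  have hdet : (Matrix.of fun k l => (Sum.elim C v : Fin i ⊕ Fin p → Fin m → R) k (e l))
      = Matrix.fromBlocks (A.submatrix r c).transpose
          (Matrix.of fun a l => A (e (Sum.inr l)) (c a)) 0 1 := by
    ext k l
    rcases k with k | k <;> rcases l with l | l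
    · simp [C, he]
    · simp [C]
    · simp [v, Pi.single_apply]
    · simp [v, Pi.single_apply, Matrix.one_apply, eq_comm]
  rw [hdet, Matrix.det_fromBlocks_zero₂₁, Matrix.det_one, mul_one, Matrix.det_transpose] at h1
  exact h1

theorem minor_mem_ann {R : Type*} [CommRing R] {m n : ℕ}
    (A : Matrix (Fin m) (Fin n) R) (j p : ℕ) (hm : m + 1 = j + p)
    (r : Fin j → Fin m) (c : Fin j → Fin n) :
    (A.submatrix r c).det ∈
      Module.annihilator R ↥(⋀[R]^p ((Fin m → R) ⧸ LinearMap.range A.mulVecLin)) := by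
  let N := LinearMap.range A.mulVecLin
  let d : (Fin m → R) [⋀^Fin j]→ₗ[R] R :=
    (Matrix.detRowAlternating (n := Fin j) (R := R)).compLinearMap (LinearMap.funLeft R R r)
  let W : (Fin m → R) [⋀^Fin p]→ₗ[R] ↥(⋀[R]^p ((Fin m → R) ⧸ N)) :=
    (exteriorPower.ιMulti R p).compLinearMap N.mkQ
  have hz : d.domCoprod W = 0 := by
    refine Module.Basis.ext_alternating (Pi.basisFun R (Fin m)) fun v hv => ?_
    have := Fintype.card_le_of_injective v hv
    simp at this
    omega
  have hcol : ∀ k, N.mkQ (A.col k) = 0 := by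
    intro k
    rw [Submodule.mkQ_apply, Submodule.Quotient.mk_eq_zero]
    change _ ∈ LinearMap.range _
    rw [Matrix.range_mulVecLin]
    exact Submodule.subset_span ⟨k, rfl⟩
  have key : ∀ v : Fin p → Fin m → R, (A.submatrix r c).det • W v = 0 := by
    intro v
    let u : Fin j ⊕ Fin p → Fin m → R := Sum.elim (fun a => A.col (c a)) v
    have h1 : d.domCoprod W u = 0 := by rw [hz]; rfl
    rw [AlternatingMap.domCoprod_apply, sum_apply] at h1
    replace h1 := (Finset.sum_eq_single (M := R ⊗[R] ↥(⋀[R]^p ((Fin m → R) ⧸ N)))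
      (Quotient.mk'' (1 : Equiv.Perm (Fin j ⊕ Fin p)) :
      Equiv.Perm.ModSumCongr (Fin j) (Fin p)) ?_ ?_).symm.trans h1
    · rw [AlternatingMap.domCoprod.summand_mk''] at h1
      have h2 : d (fun a => A.col (c a)) ⊗ₜ[R] W v = 0 := by
        simpa [u] using h1
      have h3 := congrArg (TensorProduct.lid R _) h2
      rw [TensorProduct.lid_tmul, map_zero] at h3
      have h4 : d (fun a => A.col (c a)) = (A.submatrix r c).det := by
        rw [← Matrix.det_transpose]; rfl
      rwa [h4] at h3
    · intro σ _ hσ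
      induction σ using Quotient.inductionOn' with | _ σ
      rw [AlternatingMap.domCoprod.summand_mk'']
      have hσ' : ¬ Set.MapsTo (σ⁻¹ : Equiv.Perm (Fin j ⊕ Fin p))
          (Set.range Sum.inl) (Set.range Sum.inl) := by
        intro h
        apply hσ
        apply Quotient.sound'
        rw [QuotientGroup.leftRel_apply]
        simpa using Equiv.Perm.mem_sumCongrHom_range_of_perm_mapsTo_inl h
      obtain ⟨a, b, hab⟩ : ∃ a b, σ⁻¹ (Sum.inl a) = Sum.inr b := by
        by_contra hcon
        push Not at hcon
        apply hσ'
        rintro _ ⟨a, rfl⟩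
        rcases h : σ⁻¹ (Sum.inl a) with x | x
        · exact ⟨x, rfl⟩
        · exact absurd h (hcon a x)
      rw [Equiv.Perm.inv_eq_iff_eq] at hab
      have hW : W (fun x => u (σ (Sum.inr x))) = 0 := by
        apply (exteriorPower.ιMulti R p).map_coord_zero b
        change N.mkQ (u (σ (Sum.inr b))) = 0
        rw [← hab]
        exact hcol _
      simp [hW]
    · simp
  rw [Module.mem_annihilator]
  intro x
  have hx : x ∈ Submodule.span R (Set.range (exteriorPower.ιMulti R p
      (M := (Fin m → R) ⧸ N))) := by
    rw [exteriorPower.ιMulti_span]; trivial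
  induction hx using Submodule.span_induction with
  | mem x hx =>
    obtain ⟨w, rfl⟩ := hx
    choose s hs using N.mkQ_surjective
    have := key (fun l => s (w l))
    have hw : W (fun l => s (w l)) = exteriorPower.ιMulti R p w := by
      change exteriorPower.ιMulti R p (fun l => N.mkQ (s (w l))) = _
      simp only [hs]
    rwa [hw] at this
  | zero => simp
  | add x y _ _ hx hy => rw [smul_add, hx, hy, add_zero]
  | smul a x _ hx => rw [smul_comm, hx, smul_zero]

theorem stmt12 {R : Type*} [CommRing R] {m n : ℕ}
    (A : Matrix (Fin m) (Fin n) R) (j : ℕ) (hj1 : 1 ≤ j) (hjm : j ≤ m) :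
    A.annCokerJ j ≤ Submodule.colon (A.minorsIdeal j) (A.minorsIdeal (j - 1)) ∧
      ((∃ x ∈ A.minorsIdeal (j - 1),
          Ideal.Quotient.mk (A.minorsIdeal j) x ∈ nonZeroDivisors (R ⧸ A.minorsIdeal j)) →
        A.annCokerJ j = Submodule.colon (A.minorsIdeal j) (A.minorsIdeal (j - 1))) := by
  have h1 : A.annCokerJ j ≤ Submodule.colon (A.minorsIdeal j) (A.minorsIdeal (j - 1)) := by
    obtain ⟨i, rfl⟩ := Nat.exists_eq_add_of_le' hj1
    intro f hf
    rw [Submodule.mem_colon]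
    intro s hs
    rw [Nat.add_sub_cancel] at hs
    change s ∈ Ideal.span _ at hs
    induction hs using Submodule.span_induction with
    | mem x hx =>
      obtain ⟨r, c, rfl⟩ := hx
      exact ann_mul_minor A i (m + 1 - (i + 1)) (by omega) f hf r c
    | zero => simp
    | add x y _ _ hx hy => rw [smul_add]; exact Ideal.add_mem _ hx hy
    | smul a x _ hx => rw [smul_comm]; exact Ideal.mul_mem_left _ _ hx
  refine ⟨h1, ?_⟩
  rintro ⟨x, hx, hxn⟩
  refine le_antisymm h1 ?_
  have h2 : A.minorsIdeal j ≤ A.annCokerJ j := by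
    refine Ideal.span_le.2 ?_
    rintro _ ⟨r, c, rfl⟩
    exact minor_mem_ann A j (m + 1 - j) (by omega) r c
  intro f hf
  apply h2
  have h3 : f * x ∈ A.minorsIdeal j := Submodule.mem_colon.1 hf x hx
  rw [← Ideal.Quotient.eq_zero_iff_mem, map_mul] at h3
  rw [← Ideal.Quotient.eq_zero_iff_mem]
  exact (mul_right_mem_nonZeroDivisors_eq_zero_iff hxn).1 h3
end

section
/- Let R be a commutative local ring with maximal ideal m and A = diag(λ₁, ..., λ_m) a diagonal m×m matrix with (λ₁) ⊇ (λ₂) ⊇ ... ⊇ (λ_m) as ideals. Then for each 1 ≤ j ≤ m the generalized annihilator satisfies ann.coker_j(A) = (λ_j). -/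
theorem stmt19 {R : Type*} [CommRing R] [IsLocalRing R] {m : ℕ}
    (lam : Fin m → R)
    (hdvd : ∀ i j : Fin m, i ≤ j → Ideal.span {lam j} ≤ Ideal.span {lam i})
    (j : Fin m) :
    (Matrix.diagonal lam).annCokerJ ((j : ℕ) + 1) = Ideal.span {lam j} := by
  have hn : m + 1 - ((j : ℕ) + 1) = m - j := by omega
  unfold Matrix.annCokerJ
  rw [hn]
  set N := LinearMap.range (Matrix.diagonal lam).mulVecLin with hN
  apply le_antisymm
  · intro r hr
    rw [Module.mem_annihilator] at hr
    let S := R ⧸ Ideal.span {lam j}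
    let idx : Fin (m - j) → Fin m := fun k => ⟨j + k, by omega⟩
    let f0 : (Fin m → R) →ₗ[R] (Fin (m - j) → S) :=
      LinearMap.pi fun k => (Algebra.linearMap R S).comp (LinearMap.proj (idx k))
    have hf0 : N ≤ LinearMap.ker f0 := by
      rintro _ ⟨v, rfl⟩
      rw [LinearMap.mem_ker]
      funext k
      have h1 : lam (idx k) ∈ Ideal.span {lam j} :=
        hdvd j (idx k) (by simp [idx, Fin.le_def]) (Ideal.mem_span_singleton_self _)
      have h2 : lam (idx k) * v (idx k) ∈ Ideal.span {lam j} := Ideal.mul_mem_right _ _ h1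
      simp only [f0, LinearMap.pi_apply, LinearMap.comp_apply, LinearMap.proj_apply,
        Matrix.mulVecLin_apply, Matrix.mulVec_diagonal, Algebra.linearMap_apply, Pi.zero_apply]
      exact Ideal.Quotient.eq_zero_iff_mem.mpr h2
    let f := N.liftQ f0 hf0
    let D : (Fin (m - j) → S) [⋀^Fin (m - j)]→ₗ[R] S :=
      { (MultilinearMap.restrictScalars R
          (Matrix.detRowAlternating (n := Fin (m - j)) (R := S)).toMultilinearMap) with
        map_eq_zero_of_eq' := fun v i k h hik =>
          (Matrix.detRowAlternating (n := Fin (m - j)) (R := S)).map_eq_zero_of_eq v h hik }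
    let G := exteriorPower.alternatingMapLinearEquiv (D.compLinearMap f)
    let e : Fin (m - j) → ((Fin m → R) ⧸ N) := fun k => N.mkQ (Pi.single (idx k) 1)
    have hfe : (fun k => f (e k)) = (1 : Matrix (Fin (m - j)) (Fin (m - j)) S) := by
      funext k l
      have : (idx l = idx k) ↔ k = l := by simp [idx, Fin.ext_iff, eq_comm]
      simp [f, e, f0, Pi.single_apply, Matrix.one_apply, this]
    have hG : G (exteriorPower.ιMulti R _ e) = 1 := by
      simp only [G, exteriorPower.alternatingMapLinearEquiv_apply_ιMulti]
      change Matrix.det (fun k => f (e k)) = 1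
      rw [hfe, Matrix.det_one]
    have h := congrArg G (hr (exteriorPower.ιMulti R _ e))
    rw [map_smul, hG, map_zero, Algebra.smul_def, mul_one] at h
    exact Ideal.Quotient.eq_zero_iff_mem.mp h
  · rw [Ideal.span_singleton_le_iff_mem, Module.mem_annihilator]
    have key : (lam j • exteriorPower.ιMulti R (m - j) (M := (Fin m → R) ⧸ N)).compLinearMap N.mkQ
        = 0 := by
      refine Module.Basis.ext_alternating (Pi.basisFun R (Fin m)) fun v hv => ?_
      have hex : ∃ k, v k ≤ j := by
        by_contra! hc
        have h1 : (Finset.univ.image v) ⊆ Finset.Ioi j := by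
          intro x hx
          obtain ⟨k, -, rfl⟩ := Finset.mem_image.mp hx
          exact Finset.mem_Ioi.mpr (hc k)
        have h2 := Finset.card_le_card h1
        rw [Finset.card_image_of_injective _ hv, Fin.card_Ioi, Finset.card_univ,
          Fintype.card_fin] at h2
        omega
      obtain ⟨k, hk⟩ := hex
      have hz : lam j • N.mkQ (Pi.basisFun R (Fin m) (v k)) = 0 := by
        rw [← map_smul, Submodule.mkQ_apply, Submodule.Quotient.mk_eq_zero]
        obtain ⟨c, hc⟩ := Ideal.span_singleton_le_span_singleton.mp (hdvd _ _ hk)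
        refine ⟨Pi.single (v k) c, ?_⟩
        funext i
        by_cases h : i = v k
        · subst h; simp [Matrix.mulVec_diagonal, hc]
        · simp [Matrix.mulVec_diagonal, h]
      simp only [AlternatingMap.compLinearMap_apply, AlternatingMap.smul_apply,
        AlternatingMap.zero_apply]
      set w := fun i => N.mkQ (Pi.basisFun R (Fin m) (v i)) with hw
      rw [← Function.update_eq_self k w, ← AlternatingMap.map_update_smul]
      exact AlternatingMap.map_coord_zero _ k (by simpa [hw] using hz)
    have h2 : (lam j • LinearMap.id : ⋀[R]^(m - j) ((Fin m → R) ⧸ N) →ₗ[R] _) = 0 := by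
      apply exteriorPower.linearMap_ext
      ext1 w
      choose u hu using fun i => N.mkQ_surjective (w i)
      have h3 := congrArg (fun F => F u) key
      have h4 : (fun i => N.mkQ (u i)) = w := funext hu
      simp only [AlternatingMap.compLinearMap_apply, AlternatingMap.smul_apply,
        AlternatingMap.zero_apply, h4] at h3
      simpa using h3
    intro x
    exact congrArg (fun F => F x) h2
end
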